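/- arXiv:1506.07587 — 3 statements merged into one kernel-verified Lean document; each statement's English description precedes it below -/
import Mathlib

section
/- Let S be a finitely generated reduced cancellative commutative monoid and n ∈ S with at least two factorizations. Let b be the minimum catenary degree among the Betti elements of S dividing n. If a and b' are distinct factorizations of n with d(a, b') < b, then there exists a factorization x of n with |x| > max(|a|, |b'|). -/
/-- The set of factorizations of `n` in terms of the generators `gens`. -/
def ZsetM {S : Type*} [AddCancelCommMonoid S] {k : ℕ} (gens : Fin k → S) (n : S) :
    Set (Fin k → ℕ) :=
  {a | ∑ i, a i • gens i = n}

/-- The length of a factorization. -/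
def flen {k : ℕ} (a : Fin k → ℕ) : ℕ := ∑ i, a i

/-- The distance between two factorizations:
`max (|a - gcd(a,b)|, |b - gcd(a,b)|)` (componentwise gcd = min). -/
def fdist {k : ℕ} (a b : Fin k → ℕ) : ℕ :=
  max (∑ i, (a i - b i)) (∑ i, (b i - a i))

/-- There is an `N`-chain of factorizations within `Z` from `a` to `b`. -/
def IsNChain {k : ℕ} (Z : Set (Fin k → ℕ)) (N : ℕ) (a b : Fin k → ℕ) : Prop :=
  ∃ l : List (Fin k → ℕ), l.head? = some a ∧ l.getLast? = some b ∧
    (∀ x ∈ l, x ∈ Z) ∧ l.Chain' (fun x y => fdist x y ≤ N)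

/-- The catenary degree of `n`: the least `N` such that any two factorizations
of `n` are connected by an `N`-chain. -/
noncomputable def catDegM {S : Type*} [AddCancelCommMonoid S] {k : ℕ}
    (gens : Fin k → S) (n : S) : ℕ :=
  sInf {N | ∀ a ∈ ZsetM gens n, ∀ b ∈ ZsetM gens n, IsNChain (ZsetM gens n) N a b}

/-- `n` is a Betti element: the graph on `Z(n)` joining factorizations with
nonzero componentwise gcd is disconnected. -/
def IsBettiM {S : Type*} [AddCancelCommMonoid S] {k : ℕ} (gens : Fin k → S)
    (n : S) : Prop :=
  ∃ a ∈ ZsetM gens n, ∃ b ∈ ZsetM gens n,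
    ¬ Relation.ReflTransGen
      (fun x y => x ∈ ZsetM gens n ∧ y ∈ ZsetM gens n ∧ ∃ i, min (x i) (y i) ≠ 0) a b

lemma flen_add {k : ℕ} (a b : Fin k → ℕ) : flen (a + b) = flen a + flen b :=
  Finset.sum_add_distrib

lemma fdist_le_max_flen {k : ℕ} (a b : Fin k → ℕ) : fdist a b ≤ max (flen a) (flen b) :=
  max_le_max (Finset.sum_le_sum fun _ _ => Nat.sub_le _ _)
    (Finset.sum_le_sum fun _ _ => Nat.sub_le _ _)

lemma add_mem_ZsetM {S : Type*} [AddCancelCommMonoid S] {k : ℕ} {gens : Fin k → S} {m t : S}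
    {a b : Fin k → ℕ} (ha : a ∈ ZsetM gens m) (hb : b ∈ ZsetM gens t) :
    a + b ∈ ZsetM gens (m + t) := by
  simp only [ZsetM, Set.mem_ofPred_eq] at *
  simp [add_smul, Finset.sum_add_distrib, ha, hb]

/-- Two factorizations of `n` differ from their gcd by factorizations of a common divisor
of `n`. -/
lemma exists_sub_inf_mem_ZsetM {S : Type*} [AddCancelCommMonoid S] {k : ℕ} {gens : Fin k → S}
    {n : S} {x y : Fin k → ℕ} (hx : x ∈ ZsetM gens n) (hy : y ∈ ZsetM gens n) :
    ∃ m t : S, n = m + t ∧ x ⊓ y ∈ ZsetM gens t ∧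
      x - x ⊓ y ∈ ZsetM gens m ∧ y - x ⊓ y ∈ ZsetM gens m := by
  have hx' := add_mem_ZsetM (gens := gens) (a := x - x ⊓ y) (b := x ⊓ y) rfl rfl
  have hy' := add_mem_ZsetM (gens := gens) (a := y - x ⊓ y) (b := x ⊓ y) rfl rfl
  rw [tsub_add_cancel_of_le inf_le_left] at hx'
  rw [tsub_add_cancel_of_le inf_le_right] at hy'
  have hxn := hx.symm.trans hx'
  have hyn := hy.symm.trans hy'
  exact ⟨_, _, hxn, rfl, rfl, (add_right_cancel (hxn.symm.trans hyn)).symm⟩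

/-- An element with two distinct factorizations, all of whose factorizations have length at most
`d`, is divisible by a Betti element with the same length bound. -/
lemma exists_isBettiM_dvd {S : Type*} [AddCancelCommMonoid S] {k : ℕ} (gens : Fin k → S)
    (d : ℕ) (n : S) {a b : Fin k → ℕ} (ha : a ∈ ZsetM gens n) (hb : b ∈ ZsetM gens n)
    (hab : a ≠ b) (hd : ∀ z ∈ ZsetM gens n, flen z ≤ d) :
    ∃ m : S, IsBettiM gens m ∧ (∃ t : S, n = m + t) ∧ ∀ z ∈ ZsetM gens m, flen z ≤ d := by
  induction d using Nat.strong_induction_on generalizing n a b with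
  | _ d ih =>
    by_cases hB : IsBettiM gens n
    · exact ⟨n, hB, ⟨0, (add_zero n).symm⟩, hd⟩
    obtain ⟨x, y, hx, hy, ⟨i, hi⟩, hxy⟩ : ∃ x y, x ∈ ZsetM gens n ∧ y ∈ ZsetM gens n ∧
        (∃ i, min (x i) (y i) ≠ 0) ∧ x ≠ y := by
      by_contra! hcon
      refine hB ⟨a, ha, b, hb, fun hpath => hab ?_⟩
      clear hab hb
      induction hpath with
      | refl => rfl
      | tail _ h ih => exact ih.trans (hcon _ _ h.1 h.2.1 h.2.2)
    obtain ⟨m, t, hn, hg, hxm, hym⟩ := exists_sub_inf_mem_ZsetM hx hy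
    have hpos : 0 < flen (x ⊓ y) :=
      lt_of_lt_of_le (Nat.pos_of_ne_zero hi)
        (Finset.single_le_sum (f := x ⊓ y) (fun _ _ => Nat.zero_le _) (Finset.mem_univ i))
    have hz : ∀ z ∈ ZsetM gens m, flen z + flen (x ⊓ y) ≤ d := fun z hz => by
      rw [← flen_add]
      exact hd _ (hn ▸ add_mem_ZsetM hz hg)
    have hne : x - x ⊓ y ≠ y - x ⊓ y := fun h => hxy <| by
      rw [← tsub_add_cancel_of_le (inf_le_left : x ⊓ y ≤ x), h,
        tsub_add_cancel_of_le inf_le_right]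
    have hxd := hz _ hxm
    obtain ⟨m', hB', ⟨t', ht'⟩, hd'⟩ := ih (d - flen (x ⊓ y)) (by omega) m hxm hym hne
      fun z h => by have := hz z h; omega
    exact ⟨m', hB', ⟨t' + t, by rw [hn, ht', add_assoc]⟩, fun z h => (hd' z h).trans (Nat.sub_le _ _)⟩

/-- The catenary degree is at most the maximal factorization length. -/
lemma catDegM_le_of_flen_le {S : Type*} [AddCancelCommMonoid S] {k : ℕ} (gens : Fin k → S)
    {m : S} {d : ℕ} (hd : ∀ z ∈ ZsetM gens m, flen z ≤ d) : catDegM gens m ≤ d := by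
  refine Nat.sInf_le fun x hx y hy => ⟨[x, y], rfl, rfl, by simp [hx, hy], ?_⟩
  exact List.isChain_pair.2 ((fdist_le_max_flen x y).trans (max_le (hd x hx) (hd y hy)))

/-- If a and b' are distinct factorizations of n with d(a, b') < b, the minimum
catenary degree among Betti elements dividing n, then there is a factorization
x of n with |x| > max(|a|, |b'|). -/
theorem exists_longer_factorization {S : Type*} [AddCancelCommMonoid S] {k : ℕ}
    (gens : Fin k → S)
    (hred : ∀ a b : S, a + b = 0 → a = 0)
    (hgen : ∀ s : S, ∃ a : Fin k → ℕ, ∑ i, a i • gens i = s)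
    (hatom : ∀ i, ∀ a : Fin k → ℕ, ∑ j, a j • gens j = gens i → a = Pi.single i 1)
    (n : S) (hn : ∃ a ∈ ZsetM gens n, ∃ b ∈ ZsetM gens n, a ≠ b)
    (a b' : Fin k → ℕ) (ha : a ∈ ZsetM gens n) (hb' : b' ∈ ZsetM gens n)
    (hne : a ≠ b')
    (hlt : fdist a b' <
      sInf {c | ∃ m : S, IsBettiM gens m ∧ (∃ t : S, n = m + t) ∧ catDegM gens m = c}) :
    ∃ x ∈ ZsetM gens n, max (flen a) (flen b') < flen x := by
  by_contra! hcon
  obtain ⟨m, t, hnm, hg, ham, hbm⟩ := exists_sub_inf_mem_ZsetM ha hb'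
  have hla : flen (a - a ⊓ b') + flen (a ⊓ b') = flen a := by
    rw [← flen_add, tsub_add_cancel_of_le inf_le_left]
  have hlb : flen (b' - a ⊓ b') + flen (a ⊓ b') = flen b' := by
    rw [← flen_add, tsub_add_cancel_of_le inf_le_right]
  have hdist : fdist a b' = max (flen (a - a ⊓ b')) (flen (b' - a ⊓ b')) := by
    simp only [fdist, flen, Pi.sub_apply, Pi.inf_apply]
    congr 1 <;> refine Finset.sum_congr rfl fun i _ => ?_ <;> omega
  have hd : ∀ z ∈ ZsetM gens m, flen z ≤ fdist a b' := fun z hz => by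
    have h := hcon _ (hnm ▸ add_mem_ZsetM hz hg)
    rw [flen_add] at h
    omega
  have hsub : a - a ⊓ b' ≠ b' - a ⊓ b' := fun h => hne <| by
    rw [← tsub_add_cancel_of_le (inf_le_left : a ⊓ b' ≤ a), h,
      tsub_add_cancel_of_le inf_le_right]
  obtain ⟨m', hB, ⟨t', ht'⟩, hd'⟩ := exists_isBettiM_dvd gens _ m ham hbm hsub hd
  exact absurd (hlt.trans_le (Nat.sInf_le
    ⟨m', hB, ⟨t' + t, by rw [hnm, ht', add_assoc]⟩, rfl⟩))
    (not_lt.2 (catDegM_le_of_flen_le gens hd'))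
end

section
/- In the numerical monoid S = ⟨11, 25, 29⟩, the Betti elements are exactly 58, 150, and 154, with catenary degrees c(58) = 4, c(150) = 12, and c(154) = 14; moreover c(175) = 11, so S has an element whose catenary degree differs from the catenary degree of every Betti element. -/
/-- The set of factorizations of `n` over the generators `gens`. -/
def Zset {k : ℕ} (gens : Fin k → ℕ) (n : ℕ) : Set (Fin k → ℕ) :=
  {a | ∑ i, a i * gens i = n}

/-- The catenary degree of `n`: the least `N` such that any two factorizations
of `n` are connected by an `N`-chain. -/
noncomputable def catDeg {k : ℕ} (gens : Fin k → ℕ) (n : ℕ) : ℕ :=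
  sInf {N | ∀ a ∈ Zset gens n, ∀ b ∈ Zset gens n, IsNChain (Zset gens n) N a b}

/-- `n` is a Betti element: the graph on `Z(n)` joining factorizations with
nonzero componentwise gcd is disconnected. -/
def IsBetti {k : ℕ} (gens : Fin k → ℕ) (n : ℕ) : Prop :=
  ∃ a ∈ Zset gens n, ∃ b ∈ Zset gens n,
    ¬ Relation.ReflTransGen
      (fun x y => x ∈ Zset gens n ∧ y ∈ Zset gens n ∧ ∃ i, min (x i) (y i) ≠ 0) a b

/-- The set of catenary degrees of elements of the monoid generated by `gens`. -/
def CatSet {k : ℕ} (gens : Fin k → ℕ) : Set ℕ :=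
  {c | ∃ n, (Zset gens n).Nonempty ∧ catDeg gens n = c}

section General

variable {k : ℕ} {gens : Fin k → ℕ} {n N : ℕ} {a b z : Fin k → ℕ}

/-- A chain leaving an isolated point `a` has a step at least as long as the isolation distance. -/
lemma le_of_isNChain {Z : Set (Fin k → ℕ)} {M : ℕ} (hab : a ≠ b)
    (hiso : ∀ y ∈ Z, y ≠ a → N ≤ fdist a y) (h : IsNChain Z M a b) : N ≤ M := by
  obtain ⟨l, hhead, hlast, hmem, hchain⟩ := h
  induction l with
  | nil => simp at hhead
  | cons x t ih =>
    obtain rfl : x = a := by simpa using hhead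
    cases t with
    | nil => exact absurd (by simpa using hlast) hab
    | cons y t =>
      have hstep := List.isChain_cons_cons.1 hchain
      by_cases hy : y = x
      · subst hy
        exact ih rfl (by simpa using hlast) (fun w hw => hmem w (List.mem_cons_of_mem _ hw)) hstep.2
      · exact (hiso y (hmem y (by simp)) hy).trans hstep.1

/-- If all factorizations lie within `N` of `z`, while `a` is at distance at least `N` from every
other factorization, then the catenary degree is `N`. -/
lemma catDeg_eq_of_isolated_of_hub (ha : a ∈ Zset gens n) (hb : b ∈ Zset gens n)
    (hz : z ∈ Zset gens n) (hab : a ≠ b)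
    (hiso : ∀ y ∈ Zset gens n, y ≠ a → N ≤ fdist a y)
    (hhub : ∀ y ∈ Zset gens n, fdist y z ≤ N) : catDeg gens n = N := by
  have hmem : N ∈ {N | ∀ a ∈ Zset gens n, ∀ b ∈ Zset gens n, IsNChain (Zset gens n) N a b} := by
    intro x hx y hy
    refine ⟨[x, z, y], rfl, rfl, by simp [hx, hz, hy], ?_⟩
    have hzy : fdist z y ≤ N := by rw [fdist, max_comm]; exact hhub y hy
    exact List.isChain_cons_cons.2 ⟨hhub x hx, List.isChain_cons_cons.2 ⟨hzy, by simp⟩⟩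
  refine le_antisymm (Nat.sInf_le hmem) (le_csInf ⟨N, hmem⟩ fun M hM => ?_)
  exact le_of_isNChain hab hiso (hM a ha b hb)

lemma isBetti_of_isolated (ha : a ∈ Zset gens n) (hb : b ∈ Zset gens n) (hab : a ≠ b)
    (hiso : ∀ y ∈ Zset gens n, y ≠ a → ∀ i, min (a i) (y i) = 0) : IsBetti gens n := by
  refine ⟨a, ha, b, hb, fun h => hab ?_⟩
  clear hb hab
  induction h with
  | refl => rfl
  | tail _ hstep ih =>
    obtain ⟨hx, hy, i, hi⟩ := hstep
    obtain rfl := ih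
    by_contra hne
    exact hi (hiso _ hy (Ne.symm hne) i)

end General

lemma mem_Zset_11_25_29 {n : ℕ} {x : Fin 3 → ℕ} :
    x ∈ Zset ![11, 25, 29] n ↔ x 0 * 11 + x 1 * 25 + x 2 * 29 = n := by
  simp [Zset, Fin.sum_univ_three]

lemma eq_vec_three_iff {x : Fin 3 → ℕ} {p q r : ℕ} :
    x = ![p, q, r] ↔ x 0 = p ∧ x 1 = q ∧ x 2 = r := by
  simp [funext_iff, Fin.forall_fin_succ]

lemma Zset_58 : Zset ![11, 25, 29] 58 = {![3, 1, 0], ![0, 0, 2]} := by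
  ext x
  simp only [mem_Zset_11_25_29, Set.mem_insert_iff, Set.mem_singleton_iff, eq_vec_three_iff]
  refine ⟨fun h => ?_, by omega⟩
  have h2 : x 2 ≤ 2 := by omega
  interval_cases x 2 <;> omega

lemma Zset_150 : Zset ![11, 25, 29] 150 = {![0, 6, 0], ![11, 0, 1]} := by
  ext x
  simp only [mem_Zset_11_25_29, Set.mem_insert_iff, Set.mem_singleton_iff, eq_vec_three_iff]
  refine ⟨fun h => ?_, by omega⟩
  have h2 : x 2 ≤ 5 := by omega
  interval_cases x 2 <;> omega

lemma Zset_154 : Zset ![11, 25, 29] 154 = {![14, 0, 0], ![0, 5, 1]} := by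
  ext x
  simp only [mem_Zset_11_25_29, Set.mem_insert_iff, Set.mem_singleton_iff, eq_vec_three_iff]
  refine ⟨fun h => ?_, by omega⟩
  have h2 : x 2 ≤ 5 := by omega
  interval_cases x 2 <;> omega

lemma Zset_175 : Zset ![11, 25, 29] 175 = {![0, 7, 0], ![8, 0, 3], ![11, 1, 1]} := by
  ext x
  simp only [mem_Zset_11_25_29, Set.mem_insert_iff, Set.mem_singleton_iff, eq_vec_three_iff]
  refine ⟨fun h => ?_, by omega⟩
  have h2 : x 2 ≤ 6 := by omega
  interval_cases x 2 <;> omega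

lemma isBetti_of_Zset_eq_pair {n : ℕ} {gens a b : Fin 3 → ℕ} (h : Zset gens n = {a, b})
    (hab : a ≠ b) (hdisj : ∀ i, min (a i) (b i) = 0) : IsBetti gens n := by
  refine isBetti_of_isolated (a := a) (b := b) (by simp [h]) (by simp [h]) hab ?_
  rintro y hy hya
  obtain rfl : y = b := by simpa [h, hya] using hy
  exact hdisj

lemma catDeg_of_Zset_eq_pair {n : ℕ} {gens a b : Fin 3 → ℕ} (h : Zset gens n = {a, b})
    (hab : a ≠ b) : catDeg gens n = fdist a b := by
  refine catDeg_eq_of_isolated_of_hub (a := a) (b := b) (z := b)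
    (by simp [h]) (by simp [h]) (by simp [h]) hab ?_ ?_
  · rintro y hy hya
    obtain rfl : y = b := by simpa [h, hya] using hy
    exact le_rfl
  · intro y hy
    rw [h] at hy
    rcases hy with rfl | rfl
    · exact le_rfl
    · simp [fdist]

/-- Trading `14·11 = 5·25 + 29`, `6·25 = 11·11 + 29` or `2·29 = 3·11 + 25` inside `x` yields a
common neighbour of `x` and any factorization disjoint from it. -/
lemma exists_common_neighbour_of_large {n : ℕ} {x y : Fin 3 → ℕ}
    (hx : x ∈ Zset ![11, 25, 29] n) (hy : y ∈ Zset ![11, 25, 29] n)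
    (hdisj : ∀ i, min (x i) (y i) = 0) (hlarge : 15 ≤ x 0 ∨ 7 ≤ x 1 ∨ 3 ≤ x 2) :
    ∃ z ∈ Zset ![11, 25, 29] n, (∃ i, min (x i) (z i) ≠ 0) ∧ ∃ i, min (z i) (y i) ≠ 0 := by
  rw [mem_Zset_11_25_29] at hx hy
  have d0 := hdisj 0
  have d1 := hdisj 1
  have d2 := hdisj 2
  rcases hlarge with h | h | h
  · refine ⟨![x 0 - 14, x 1 + 5, x 2 + 1], mem_Zset_11_25_29.2 ?_, ⟨0, ?_⟩,
      Fin.exists_fin_succ.2 (.inr (Fin.exists_fin_two.2 ?_))⟩ <;> simp <;> omega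
  · refine ⟨![x 0 + 11, x 1 - 6, x 2 + 1], mem_Zset_11_25_29.2 ?_, ⟨1, ?_⟩, ?_⟩
    · simp; omega
    · simp; omega
    · by_cases hy0 : y 0 = 0
      · exact ⟨2, by simp; omega⟩
      · exact ⟨0, by simp; omega⟩
  · refine ⟨![x 0 + 3, x 1 + 1, x 2 - 2], mem_Zset_11_25_29.2 ?_, ⟨2, ?_⟩, ?_⟩
    · simp; omega
    · simp; omega
    · by_cases hy0 : y 0 = 0
      · exact ⟨1, by simp; omega⟩
      · exact ⟨0, by simp; omega⟩

lemma large_or_large_of_disjoint {n : ℕ} (h58 : n ≠ 58) (h150 : n ≠ 150) (h154 : n ≠ 154)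
    (h0 : n ≠ 0) {x y : Fin 3 → ℕ} (hx : x ∈ Zset ![11, 25, 29] n) (hy : y ∈ Zset ![11, 25, 29] n)
    (hdisj : ∀ i, min (x i) (y i) = 0) :
    (15 ≤ x 0 ∨ 7 ≤ x 1 ∨ 3 ≤ x 2) ∨ 15 ≤ y 0 ∨ 7 ≤ y 1 ∨ 3 ≤ y 2 := by
  rw [mem_Zset_11_25_29] at hx hy
  by_contra! hsmall
  obtain ⟨⟨hx0, hx1, hx2⟩, hy0, hy1, hy2⟩ := hsmall
  rcases Nat.min_eq_zero_iff.1 (hdisj 1) with d1 | d1 <;>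
  rcases Nat.min_eq_zero_iff.1 (hdisj 2) with d2 | d2 <;>
  rcases Nat.min_eq_zero_iff.1 (hdisj 0) with d0 | d0 <;>
  simp only [d0, d1, d2] at hx hy
  all_goals first
    | omega
    | (interval_cases x 1 <;> interval_cases x 2 <;> omega)
    | (interval_cases x 1 <;> interval_cases y 2 <;> omega)

lemma not_isBetti {n : ℕ} (h58 : n ≠ 58) (h150 : n ≠ 150) (h154 : n ≠ 154) :
    ¬ IsBetti ![11, 25, 29] n := by
  rintro ⟨x, hx, y, hy, hxy⟩
  apply hxy
  by_cases hadj : ∃ i, min (x i) (y i) ≠ 0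
  · exact .single ⟨hx, hy, hadj⟩
  rcases eq_or_ne n 0 with rfl | h0
  · have h : x = y := by
      rw [mem_Zset_11_25_29] at hx hy
      ext i
      fin_cases i <;> simp <;> omega
    rw [h]
  push Not at hadj
  rcases large_or_large_of_disjoint h58 h150 h154 h0 hx hy hadj with h | h
  · obtain ⟨z, hz, hxz, hzy⟩ := exists_common_neighbour_of_large hx hy hadj h
    exact .tail (.single ⟨hx, hz, hxz⟩) ⟨hz, hy, hzy⟩
  · obtain ⟨z, hz, hyz, hzx⟩ := exists_common_neighbour_of_large hy hx
      (fun i => by rw [min_comm]; exact hadj i) h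
    exact .tail (.single ⟨hx, hz, hzx.imp fun i h => by rwa [min_comm]⟩)
      ⟨hz, hy, hyz.imp fun i h => by rwa [min_comm]⟩

lemma isBetti_11_25_29_iff (n : ℕ) :
    IsBetti ![11, 25, 29] n ↔ n = 58 ∨ n = 150 ∨ n = 154 := by
  refine ⟨fun h => ?_, ?_⟩
  · by_contra! hn
    exact not_isBetti hn.1 hn.2.1 hn.2.2 h
  · rintro (rfl | rfl | rfl)
    · exact isBetti_of_Zset_eq_pair Zset_58 (by decide) (by decide)
    · exact isBetti_of_Zset_eq_pair Zset_150 (by decide) (by decide)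
    · exact isBetti_of_Zset_eq_pair Zset_154 (by decide) (by decide)

lemma catDeg_58 : catDeg ![11, 25, 29] 58 = 4 :=
  (catDeg_of_Zset_eq_pair Zset_58 (by decide)).trans (by decide)

lemma catDeg_150 : catDeg ![11, 25, 29] 150 = 12 :=
  (catDeg_of_Zset_eq_pair Zset_150 (by decide)).trans (by decide)

lemma catDeg_154 : catDeg ![11, 25, 29] 154 = 14 :=
  (catDeg_of_Zset_eq_pair Zset_154 (by decide)).trans (by decide)

lemma catDeg_175 : catDeg ![11, 25, 29] 175 = 11 := by
  refine catDeg_eq_of_isolated_of_hub (a := ![0, 7, 0]) (b := ![8, 0, 3]) (z := ![8, 0, 3])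
    (by simp [Zset_175]) (by simp [Zset_175]) (by simp [Zset_175]) (by decide) ?_ ?_
  · rw [Zset_175]
    rintro y (rfl | rfl | rfl) hy
    · exact absurd rfl hy
    · decide
    · decide
  · rw [Zset_175]
    rintro y (rfl | rfl | rfl) <;> decide

/-- In S = ⟨11,25,29⟩: the Betti elements are exactly 58, 150, 154, with
catenary degrees 4, 12, 14; moreover c(175) = 11, so some element of S has a
catenary degree differing from that of every Betti element. -/
theorem betti_and_catdeg_11_25_29 :
    {n | IsBetti ![11, 25, 29] n} = {58, 150, 154} ∧
    catDeg ![11, 25, 29] 58 = 4 ∧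
    catDeg ![11, 25, 29] 150 = 12 ∧
    catDeg ![11, 25, 29] 154 = 14 ∧
    catDeg ![11, 25, 29] 175 = 11 ∧
    ∃ n, (Zset ![11, 25, 29] n).Nonempty ∧
      ∀ m, IsBetti ![11, 25, 29] m → catDeg ![11, 25, 29] n ≠ catDeg ![11, 25, 29] m := by
  refine ⟨?_, catDeg_58, catDeg_150, catDeg_154, catDeg_175, 175, ?_, ?_⟩
  · ext n
    simp [isBetti_11_25_29_iff]
  · simp [Zset_175]
  · intro m hm
    rcases (isBetti_11_25_29_iff m).1 hm with rfl | rfl | rfl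
    · simp [catDeg_175, catDeg_58]
    · simp [catDeg_175, catDeg_150]
    · simp [catDeg_175, catDeg_154]
end

section
/- Let G be a cyclic group of order n ≥ 4 and S = B(G) the block monoid of zero-sum sequences over G. Then the set of catenary degrees of S is C(S) = {0, 2, 3, ..., n}. -/
open scoped Classical

/-- A sequence over `G` (a multiset of elements of `G`) is a minimal zero-sum
sequence if it is nonempty, has sum zero, and no proper nonempty subsequence
has sum zero. These are the irreducibles of the block monoid `B(G)`. -/
def IsMinZeroSum {G : Type*} [AddCommGroup G] (s : Multiset G) : Prop :=
  s ≠ 0 ∧ s.sum = 0 ∧ ∀ t ≤ s, t.sum = 0 → t = 0 ∨ t = s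

/-- The set of factorizations of a zero-sum sequence `A` into minimal zero-sum
sequences: multisets of irreducibles of `B(G)` whose product (sum) is `A`. -/
def BFact {G : Type*} [AddCommGroup G] (A : Multiset G) :
    Set (Multiset (Multiset G)) :=
  {F | (∀ s ∈ F, IsMinZeroSum s) ∧ F.sum = A}

/-- The distance between two factorizations: the maximum of the lengths of the
parts remaining after cancelling the common irreducibles. -/
noncomputable def bdist {G : Type*} [AddCommGroup G] (F F' : Multiset (Multiset G)) : ℕ :=
  max (F - F').card (F' - F).card

/-- There is an `N`-chain of factorizations within `Z` from `a` to `b`. -/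
def BIsNChain {G : Type*} [AddCommGroup G] (Z : Set (Multiset (Multiset G)))
    (N : ℕ) (a b : Multiset (Multiset G)) : Prop :=
  ∃ l : List (Multiset (Multiset G)), l.head? = some a ∧ l.getLast? = some b ∧
    (∀ x ∈ l, x ∈ Z) ∧ l.Chain' (fun x y => bdist x y ≤ N)

/-- The catenary degree of a zero-sum sequence `A` in the block monoid: the
least `N` such that any two factorizations of `A` are joined by an `N`-chain. -/
noncomputable def bCatDeg {G : Type*} [AddCommGroup G] (A : Multiset G) : ℕ :=
  sInf {N | ∀ F ∈ BFact A, ∀ F' ∈ BFact A, BIsNChain (BFact A) N F F'}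

theorem Multiset.exists_le_map_eq_of_le_map {α β : Type*} {f : α → β} {M : Multiset α}
    {t : Multiset β} (h : t ≤ M.map f) : ∃ M' ≤ M, M'.map f = t := by
  induction M using Multiset.induction_on generalizing t with
  | empty => exact ⟨0, le_rfl, by simpa using (h.antisymm (zero_le t)).symm⟩
  | cons a M ih =>
    rw [map_cons] at h
    by_cases ha : f a ∈ t
    · obtain ⟨t, rfl⟩ := exists_cons_of_mem ha
      obtain ⟨M', hM', rfl⟩ := ih ((cons_le_cons_iff _).1 h)
      exact ⟨a ::ₘ M', cons_le_cons _ hM', by simp⟩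
    · obtain ⟨M', hM', rfl⟩ := ih ((le_cons_of_notMem ha).1 h)
      exact ⟨M', hM'.trans (le_cons_self _ _), rfl⟩

theorem Multiset.exists_of_le_replicate_add_replicate {α : Type*} {a b : α} {m k : ℕ}
    {t : Multiset α} (h : t ≤ replicate m a + replicate k b) :
    ∃ x ≤ m, ∃ y ≤ k, t = replicate x a + replicate y b := by
  obtain ⟨x, hx, hx'⟩ := le_replicate_iff.1 (inter_le_right (s := t) (t := replicate m a))
  obtain ⟨y, hy, hy'⟩ := le_replicate_iff.1 (tsub_le_iff_left.2 h)
  exact ⟨x, hx, y, hy, by rw [← hx', ← hy', add_comm, sub_add_inter]⟩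

theorem Multiset.exists_le_card_le_of_le_sum {α : Type*} {F : Multiset (Multiset α)}
    {u : Multiset α} (h : u ≤ F.sum) : ∃ W ≤ F, W.card ≤ u.card ∧ u ≤ W.sum := by
  induction F using Multiset.induction_on generalizing u with
  | empty => exact ⟨0, le_rfl, by simp, by simpa using h⟩
  | cons s F ih =>
    rw [sum_cons] at h
    obtain ⟨W, hWF, hWc, hW⟩ := ih (tsub_le_iff_left.2 h)
    rcases (Multiset.sub_le_self u s).eq_or_lt with hu | hu
    · rw [hu] at hWc hW
      exact ⟨W, hWF.trans (le_cons_self _ _), hWc, hW⟩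
    · refine ⟨s ::ₘ W, cons_le_cons _ hWF, ?_, ?_⟩
      · have := card_lt_card hu
        rw [card_cons]
        omega
      · rw [sum_cons]
        exact tsub_le_iff_left.1 hW

section BlockMonoid

variable {G : Type*} [AddCommGroup G]

theorem IsMinZeroSum.card_le [Fintype G] {s : Multiset G} (hs : IsMinZeroSum s) :
    s.card ≤ Fintype.card G := by
  induction s using Quotient.inductionOn with | _ l =>
  obtain ⟨-, -, hmin⟩ := hs
  by_contra! hlt
  rw [Multiset.quot_mk_to_coe, Multiset.coe_card] at hlt
  obtain ⟨i, hi, j, hj, hij, heq⟩ := Finset.exists_ne_map_eq_of_card_lt_of_maps_to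
    (s := Finset.range l.length) (t := (Finset.univ : Finset G)) (by simpa using hlt)
    (f := fun i => (l.take i).sum) (fun _ _ => by simp)
  wlog hlt' : i < j generalizing i j
  · exact this j hj i hi hij.symm heq.symm (by omega)
  rw [Finset.mem_range] at hi hj
  have hsum : ((l.drop i).take (j - i)).sum = 0 := by
    have h : l.take j = l.take i ++ (l.drop i).take (j - i) := by
      rw [← List.take_add]; congr 1; omega
    simpa [h] using heq
  have hlen : ((l.drop i).take (j - i)).length = j - i := by
    simp only [List.length_take, List.length_drop]; omega
  rcases hmin ((l.drop i).take (j - i) : List G)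
    (Multiset.coe_le.2 ((List.take_sublist _ _).trans (List.drop_sublist _ _)).subperm)
    (by simpa using hsum) with h | h
  · have := congrArg Multiset.card h
    simp only [Multiset.coe_card, Multiset.card_zero] at this
    omega
  · have := congrArg Multiset.card h
    simp only [Multiset.coe_card, Multiset.quot_mk_to_coe] at this
    omega

theorem isMinZeroSum_map_nsmul (g : G) {M : Multiset ℕ} (hpos : ∀ i ∈ M, 0 < i) (hM : M ≠ 0)
    (hsum : M.sum = addOrderOf g) : IsMinZeroSum (M.map (· • g)) := by
  have key (N : Multiset ℕ) : (N.map (· • g)).sum = N.sum • g := by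
    induction N using Multiset.induction_on with
    | empty => simp
    | cons a N ih => simp [ih, add_nsmul]
  refine ⟨by simpa using hM, by rw [key, hsum, addOrderOf_nsmul_eq_zero], fun t ht ht0 => ?_⟩
  obtain ⟨N, hN, rfl⟩ := Multiset.exists_le_map_eq_of_le_map ht
  rw [key, ← addOrderOf_dvd_iff_nsmul_eq_zero, ← hsum] at ht0
  obtain ⟨N', rfl⟩ := Multiset.le_iff_exists_add.1 hN
  have zero_of_sum {K : Multiset ℕ} (hK : K ≤ N + N') (h0 : K.sum = 0) : K = 0 := by
    refine Multiset.eq_zero_of_forall_notMem fun i hi => ?_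
    have := hpos i (Multiset.mem_of_le hK hi)
    have := Multiset.sum_eq_zero_iff.1 h0 i hi
    omega
  rcases Nat.eq_zero_or_pos N.sum with h | h
  · exact .inl (by rw [zero_of_sum hN h, Multiset.map_zero])
  · right
    have := Nat.le_of_dvd h ht0
    rw [Multiset.sum_add] at this
    rw [zero_of_sum (K := N') (Multiset.le_add_left _ _) (by omega), add_zero]

theorem exists_mem_BFact (A : Multiset G) (hA : A.sum = 0) : ∃ F, F ∈ BFact A := by
  induction A using Multiset.strongInductionOn with | _ A ih =>
  by_cases h0 : A = 0
  · exact ⟨0, by simp, by simp [h0]⟩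
  by_cases hmin : IsMinZeroSum A
  · exact ⟨{A}, by simpa using hmin, by simp⟩
  have : ∃ t ≤ A, t.sum = 0 ∧ t ≠ 0 ∧ t ≠ A := by
    by_contra! h
    exact hmin ⟨h0, hA, fun t ht hts => or_iff_not_imp_left.2 fun h' => h t ht hts h'⟩
  obtain ⟨t, ht, hts, ht0, htA⟩ := this
  obtain ⟨r, rfl⟩ := Multiset.le_iff_exists_add.1 ht
  have hr : r ≠ 0 := by rintro rfl; simp at htA
  obtain ⟨F, hF, hFs⟩ := ih t (lt_add_of_pos_right _ (pos_iff_ne_zero.2 hr)) hts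
  obtain ⟨F', hF', hFs'⟩ := ih r (lt_add_of_pos_left _ (pos_iff_ne_zero.2 ht0))
    (by simpa [hts] using hA)
  refine ⟨F + F', fun s hs => ?_, by rw [Multiset.sum_add, hFs, hFs']⟩
  exact (Multiset.mem_add.1 hs).elim (hF s) (hF' s)

theorem add_mem_BFact {A B : Multiset G} {F F' : Multiset (Multiset G)} (hF : F ∈ BFact A)
    (hF' : F' ∈ BFact B) : F + F' ∈ BFact (A + B) :=
  ⟨fun s hs => (Multiset.mem_add.1 hs).elim (hF.1 s) (hF'.1 s), by
    rw [Multiset.sum_add, hF.2, hF'.2]⟩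

theorem mem_BFact_sum_of_le {A : Multiset G} {F W : Multiset (Multiset G)} (hF : F ∈ BFact A)
    (hW : W ≤ F) : W ∈ BFact W.sum :=
  ⟨fun s hs => hF.1 s (Multiset.mem_of_le hW hs), rfl⟩

theorem le_of_mem_BFact {A s : Multiset G} {F : Multiset (Multiset G)} (hF : F ∈ BFact A)
    (hs : s ∈ F) : s ≤ A :=
  hF.2 ▸ Multiset.le_sum_of_mem hs

theorem eq_zero_of_sum_eq_zero {F : Multiset (Multiset G)} (hF : ∀ s ∈ F, IsMinZeroSum s)
    (h : F.sum = 0) : F = 0 :=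
  Multiset.eq_zero_of_forall_notMem fun s hs => (hF s hs).1 (Multiset.sum_eq_zero_iff.1 h s hs)

theorem bdist_self (F : Multiset (Multiset G)) : bdist F F = 0 := by simp [bdist]

theorem bdist_comm (F F' : Multiset (Multiset G)) : bdist F F' = bdist F' F := max_comm _ _

theorem bdist_add_right (F F' C : Multiset (Multiset G)) :
    bdist (F + C) (F' + C) = bdist F F' := by
  simp [bdist, add_tsub_add_eq_tsub_right]

theorem bdist_eq_of_disjoint {F F' : Multiset (Multiset G)} (h : ∀ s ∈ F, s ∉ F') :
    bdist F F' = max F.card F'.card := by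
  have key {K K' : Multiset (Multiset G)} (h : ∀ s ∈ K, s ∉ K') : K - K' = K := by
    ext s
    rw [Multiset.count_sub]
    by_cases hs : s ∈ K
    · simp [Multiset.count_eq_zero_of_notMem (h s hs)]
    · simp [Multiset.count_eq_zero_of_notMem hs]
  rw [bdist, key h, key fun s hs hs' => h s hs' hs]

theorem eq_of_bdist_le_one {A : Multiset G} {F F' : Multiset (Multiset G)} (hF : F ∈ BFact A)
    (hF' : F' ∈ BFact A) (h : bdist F F' ≤ 1) : F = F' := by
  obtain ⟨h1, h2⟩ := max_le_iff.1 h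
  have e1 := Multiset.sub_add_inter F F'
  have e2 := Multiset.sub_add_inter F' F
  rw [Multiset.inter_comm] at e2
  have hs : (F - F').sum = (F' - F).sum := by
    have := hF.2.trans hF'.2.symm
    rw [← e1, ← e2, Multiset.sum_add, Multiset.sum_add] at this
    simpa [e1, e2] using this
  have hm : ∀ s ∈ F - F', IsMinZeroSum s := fun s hs =>
    hF.1 s (Multiset.mem_of_le (Multiset.sub_le_self _ _) hs)
  have hm' : ∀ s ∈ F' - F, IsMinZeroSum s := fun s hs =>
    hF'.1 s (Multiset.mem_of_le (Multiset.sub_le_self _ _) hs)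
  suffices F - F' = F' - F by rw [← e1, this, e2]
  rcases Nat.le_one_iff_eq_zero_or_eq_one.1 h1 with h1 | h1
  · rw [Multiset.card_eq_zero] at h1
    rw [h1] at hs ⊢
    exact (eq_zero_of_sum_eq_zero hm' hs.symm).symm
  rcases Nat.le_one_iff_eq_zero_or_eq_one.1 h2 with h2 | h2
  · rw [Multiset.card_eq_zero] at h2
    rw [h2] at hs ⊢
    exact eq_zero_of_sum_eq_zero hm hs
  obtain ⟨a, ha⟩ := Multiset.card_eq_one.1 h1
  obtain ⟨b, hb⟩ := Multiset.card_eq_one.1 h2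
  rw [ha, hb, Multiset.sum_singleton, Multiset.sum_singleton] at hs
  rw [ha, hb, hs]

/-- Two multisets are joined by steps of length at most `N` between members of `Z`. -/
def BJoined (Z : Set (Multiset (Multiset G))) (N : ℕ) :
    Multiset (Multiset G) → Multiset (Multiset G) → Prop :=
  Relation.ReflTransGen fun x y => x ∈ Z ∧ y ∈ Z ∧ bdist x y ≤ N

theorem BJoined.symm {Z : Set (Multiset (Multiset G))} {N : ℕ} {F F' : Multiset (Multiset G)}
    (h : BJoined Z N F F') : BJoined Z N F' F := by
  induction h with
  | refl => exact .refl
  | tail _ h ih => exact .head ⟨h.2.1, h.1, by rw [bdist_comm]; exact h.2.2⟩ ih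

theorem BJoined.add_right {A B : Multiset G} {N : ℕ} {F F' C : Multiset (Multiset G)}
    (h : BJoined (BFact A) N F F') (hC : C ∈ BFact B) :
    BJoined (BFact (A + B)) N (F + C) (F' + C) := by
  induction h with
  | refl => exact .refl
  | tail _ h ih =>
    exact .tail ih ⟨add_mem_BFact h.1 hC, add_mem_BFact h.2.1 hC, by
      rw [bdist_add_right]; exact h.2.2⟩

theorem BJoined.isNChain {Z : Set (Multiset (Multiset G))} {N : ℕ} {F F' : Multiset (Multiset G)}
    (hF' : F' ∈ Z) (h : BJoined Z N F F') : BIsNChain Z N F F' := by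
  induction h using Relation.ReflTransGen.head_induction_on with
  | refl => exact ⟨[F'], rfl, rfl, by simpa using hF', .singleton _⟩
  | head h _ ih =>
    obtain ⟨l, h1, h2, h3, h4⟩ := ih
    cases l with
    | nil => simp at h1
    | cons x l =>
      simp only [List.head?_cons, Option.some.injEq] at h1
      subst h1
      refine ⟨_ :: x :: l, rfl, by rw [List.getLast?_cons_cons]; exact h2, ?_,
        List.isChain_cons_cons.2 ⟨h.2.2, h4⟩⟩
      exact List.forall_mem_cons.2 ⟨h.1, h3⟩

theorem BIsNChain.eq_of_bdist_le {Z : Set (Multiset (Multiset G))} {N : ℕ}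
    {F F' : Multiset (Multiset G)} (hZ : ∀ x ∈ Z, ∀ y ∈ Z, bdist x y ≤ N → x = y)
    (h : BIsNChain Z N F F') : F = F' := by
  obtain ⟨l, h1, h2, h3, h4⟩ := h
  induction l generalizing F with
  | nil => simp at h1
  | cons x l ih =>
    simp only [List.head?_cons, Option.some.injEq] at h1
    subst h1
    cases l with
    | nil => simpa using h2
    | cons y l =>
      obtain ⟨hxy, h4⟩ := List.isChain_cons_cons.1 h4
      rw [hZ x (h3 x (by simp)) y (h3 y (by simp)) hxy]
      exact ih rfl (by rwa [List.getLast?_cons_cons] at h2)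
        (fun z hz => h3 z (List.mem_cons_of_mem _ hz)) h4

theorem joined_of_card_le {N : ℕ} (hN : ∀ s : Multiset G, IsMinZeroSum s → s.card ≤ N)
    (A : Multiset G) {F F' : Multiset (Multiset G)} (hF : F ∈ BFact A) (hF' : F' ∈ BFact A) :
    BJoined (BFact A) N F F' := by
  induction A using Multiset.strongInductionOn generalizing F F' with | _ A ih =>
  by_cases hc : F.card ≤ N ∧ F'.card ≤ N
  · exact .single ⟨hF, hF', max_le ((Multiset.card_le_card (Multiset.sub_le_self _ _)).trans hc.1)
      ((Multiset.card_le_card (Multiset.sub_le_self _ _)).trans hc.2)⟩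
  wlog hlt : N < F'.card generalizing F F'
  · exact (this hF' hF (fun h => hc h.symm) (by omega)).symm
  rcases Multiset.empty_or_exists_mem F with rfl | ⟨u, hu⟩
  · rw [eq_zero_of_sum_eq_zero hF'.1 (hF'.2.trans hF.2.symm)]
    exact .refl
  obtain ⟨F, rfl⟩ := Multiset.exists_cons_of_mem hu
  have hum := hF.1 u hu
  obtain ⟨W, hWF, hWc, huW⟩ := Multiset.exists_le_card_le_of_le_sum (F := F') (u := u)
    (by rw [hF'.2]; exact le_of_mem_BFact hF hu)
  obtain ⟨V, rfl⟩ := Multiset.le_iff_exists_add.1 hWF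
  have hV : V ≠ 0 := by
    rintro rfl
    have := hN u hum
    rw [add_zero] at hlt
    omega
  have hW := mem_BFact_sum_of_le hF' hWF
  have hVm := mem_BFact_sum_of_le hF' (Multiset.le_add_left V W)
  have hA : W.sum + V.sum = A := by rw [← Multiset.sum_add]; exact hF'.2
  obtain ⟨r, hr⟩ := Multiset.le_iff_exists_add.1 huW
  have sum_zero {B : Multiset G} {K : Multiset (Multiset G)} (hK : K ∈ BFact B) : B.sum = 0 := by
    rw [← hK.2, ← Multiset.coe_sumAddMonoidHom, map_multiset_sum]
    refine Multiset.sum_eq_zero fun x hx => ?_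
    obtain ⟨s, hs, rfl⟩ := Multiset.mem_map.1 hx
    exact (hK.1 s hs).2.1
  obtain ⟨w, hw⟩ := exists_mem_BFact r (by simpa [hr, hum.2.1] using sum_zero hW)
  have hu1 : {u} ∈ BFact u := ⟨by simpa using hum, by simp⟩
  have huw : {u} + w ∈ BFact W.sum := hr ▸ add_mem_BFact hu1 hw
  have hAr : (r + V.sum) + u = A := by rw [← hA, hr]; abel
  have hVs : 0 < V.sum := pos_iff_ne_zero.2 fun h => hV (eq_zero_of_sum_eq_zero hVm.1 h)
  have h1 := (ih W.sum (by rw [← hA]; exact lt_add_of_pos_right _ hVs) huw hW).add_right hVm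
  have hFr : F ∈ BFact (r + V.sum) := by
    refine ⟨fun s hs => hF.1 s (Multiset.mem_cons_of_mem hs), ?_⟩
    have := hF.2
    rw [Multiset.sum_cons, ← hAr, add_comm _ u] at this
    exact add_left_cancel this
  have h2 := (ih (r + V.sum) (by
    rw [← hAr]; exact lt_add_of_pos_right _ (pos_iff_ne_zero.2 hum.1)) hFr
    (add_mem_BFact hw hVm)).add_right hu1
  rw [hA] at h1
  rw [hAr, add_comm F, add_comm (w + V), ← add_assoc] at h2
  rw [← Multiset.singleton_add]
  exact h2.trans h1

theorem isNChain_of_card_le {N : ℕ} (hN : ∀ s : Multiset G, IsMinZeroSum s → s.card ≤ N)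
    (A : Multiset G) : N ∈ {N | ∀ F ∈ BFact A, ∀ F' ∈ BFact A, BIsNChain (BFact A) N F F'} :=
  fun _ hF _ hF' => (joined_of_card_le hN A hF hF').isNChain hF'

theorem bCatDeg_eq_zero_of_subsingleton {A : Multiset G} (h : (BFact A).Subsingleton) :
    bCatDeg A = 0 :=
  Nat.sInf_eq_zero.2 <| .inl fun F hF F' hF' =>
    ⟨[F], rfl, by simp [h hF hF'], by simpa using hF, .singleton _⟩

theorem bCatDeg_ne_one {N : ℕ} (hN : ∀ s : Multiset G, IsMinZeroSum s → s.card ≤ N)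
    (A : Multiset G) : bCatDeg A ≠ 1 := by
  intro h1
  have hmem := Nat.sInf_mem ⟨N, isNChain_of_card_le hN A⟩
  change bCatDeg A ∈ _ at hmem
  rw [h1] at hmem
  have : bCatDeg A = 0 := bCatDeg_eq_zero_of_subsingleton fun F hF F' hF' =>
    (hmem F hF F' hF').eq_of_bdist_le fun x hx y hy => eq_of_bdist_le_one hx hy
  omega

theorem bCatDeg_eq_bdist {N : ℕ} (hN : ∀ s : Multiset G, IsMinZeroSum s → s.card ≤ N)
    {A : Multiset G} {F F' : Multiset (Multiset G)} (hF : F ∈ BFact A) (hF' : F' ∈ BFact A)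
    (h : ∀ K ∈ BFact A, K = F ∨ K = F') : bCatDeg A = bdist F F' := by
  refine le_antisymm (Nat.sInf_le fun K hK K' hK' => ?_) ?_
  · refine BJoined.isNChain hK' (.single ⟨hK, hK', ?_⟩)
    rcases h K hK with rfl | rfl <;> rcases h K' hK' with rfl | rfl <;>
      simp [bdist_self, bdist_comm]
  · by_contra! hlt
    have hmem := Nat.sInf_mem ⟨N, isNChain_of_card_le hN A⟩
    have : F = F' := (hmem F hF F' hF').eq_of_bdist_le fun x hx y hy hxy => by
      replace hxy := hxy.trans_lt hlt
      rcases h x hx with rfl | rfl <;> rcases h y hy with rfl | rfl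
      · rfl
      · exact absurd hxy (lt_irrefl _)
      · rw [bdist_comm] at hxy
        exact absurd hxy (lt_irrefl _)
      · rfl
    rw [this, bdist_self] at hlt
    exact absurd hlt (Nat.not_lt_zero _)

theorem eq_replicate_of_mem_BFact {B s : Multiset G} {k : ℕ} {F : Multiset (Multiset G)}
    (hs : 0 < s.card) (hB : B.card = k * s.card) (h : ∀ t ≤ B, IsMinZeroSum t → t = s)
    (hF : F ∈ BFact B) : F = Multiset.replicate k s := by
  have hFs : F = Multiset.replicate F.card s :=
    Multiset.eq_replicate_card.2 fun t ht => h t (le_of_mem_BFact hF ht) (hF.1 t ht)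
  have hc := congrArg Multiset.card hF.2
  rw [hFs, Multiset.sum_replicate, Multiset.card_nsmul, hB] at hc
  rw [hFs, Nat.eq_of_mul_eq_mul_right hs hc]

theorem isMinZeroSum_replicate_addOrderOf {g : G} (hg : 0 < addOrderOf g) :
    IsMinZeroSum (Multiset.replicate (addOrderOf g) g) := by
  simpa using isMinZeroSum_map_nsmul g (M := Multiset.replicate (addOrderOf g) 1)
    (fun i hi => by simp [Multiset.eq_of_mem_replicate hi])
    (by rw [← Multiset.card_pos]; simpa using hg) (by simp)

theorem isMinZeroSum_nsmul_cons_replicate {g : G} {a : ℕ} (ha : 0 < a) (han : a ≤ addOrderOf g) :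
    IsMinZeroSum (a • g ::ₘ Multiset.replicate (addOrderOf g - a) g) := by
  simpa using isMinZeroSum_map_nsmul g (M := a ::ₘ Multiset.replicate (addOrderOf g - a) 1)
    (fun i hi => by
      rcases Multiset.mem_cons.1 hi with rfl | hi
      · exact ha
      · simp [Multiset.eq_of_mem_replicate hi])
    Multiset.cons_ne_zero (by simp; omega)

theorem sub_nsmul_neg_eq {g : G} {a : ℕ} (han : a ≤ addOrderOf g) :
    (addOrderOf g - a) • (-g) = a • g := by
  rw [neg_nsmul, neg_eq_iff_add_eq_zero, ← add_nsmul, Nat.sub_add_cancel han,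
    addOrderOf_nsmul_eq_zero]

theorem isMinZeroSum_nsmul_cons_replicate_neg {g : G} {a : ℕ} (han : a < addOrderOf g) :
    IsMinZeroSum (a • g ::ₘ Multiset.replicate a (-g)) := by
  have := isMinZeroSum_nsmul_cons_replicate (g := -g) (a := addOrderOf g - a) (by omega)
    (by rw [addOrderOf_neg]; omega)
  rwa [sub_nsmul_neg_eq han.le, addOrderOf_neg, Nat.sub_sub_self han.le] at this

theorem isMinZeroSum_pair_neg {g : G} (hg : 1 < addOrderOf g) :
    IsMinZeroSum ({g, -g} : Multiset G) := by
  simpa [Multiset.insert_eq_cons] using isMinZeroSum_nsmul_cons_replicate_neg hg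

theorem IsMinZeroSum.eq_pair_neg {s : Multiset G} {g : G} (hs : IsMinZeroSum s)
    (h : {g, -g} ≤ s) : s = {g, -g} :=
  ((hs.2.2 _ h (by simp [Multiset.insert_eq_cons])).resolve_left
    (by simp [Multiset.insert_eq_cons])).symm

theorem pair_le_replicate_add_replicate {α : Type*} {a b : α} {x y : ℕ} (hx : 0 < x)
    (hy : 0 < y) : {a, b} ≤ Multiset.replicate x a + Multiset.replicate y b := by
  have h1 := Multiset.replicate_mono a hx
  have h2 := Multiset.replicate_mono b hy
  simpa [Multiset.insert_eq_cons] using add_le_add h1 h2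

theorem IsMinZeroSum.eq_of_le_replicate {g : G} {t : Multiset G} (ht : IsMinZeroSum t)
    (h : t ≤ Multiset.replicate (addOrderOf g) g) : t = Multiset.replicate (addOrderOf g) g := by
  obtain ⟨x, hx, rfl⟩ := Multiset.le_replicate_iff.1 h
  have h0 := ht.2.1
  rw [Multiset.sum_replicate, ← addOrderOf_dvd_iff_nsmul_eq_zero] at h0
  rcases Nat.eq_zero_or_pos x with rfl | hx0
  · exact absurd rfl ht.1
  · rw [hx.antisymm (Nat.le_of_dvd hx0 h0)]

theorem IsMinZeroSum.eq_pair_of_le {g : G} {a : ℕ} (han : a < addOrderOf g) {t : Multiset G}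
    (ht : IsMinZeroSum t) (h : t ≤ Multiset.replicate a g + Multiset.replicate a (-g)) :
    t = {g, -g} := by
  obtain ⟨x, hx, y, hy, rfl⟩ := Multiset.exists_of_le_replicate_add_replicate h
  have h0 := ht.2.1
  rcases Nat.eq_zero_or_pos x with rfl | hx0
  · rw [Multiset.replicate_zero, zero_add, Multiset.sum_replicate, neg_nsmul, neg_eq_zero,
      ← addOrderOf_dvd_iff_nsmul_eq_zero] at h0
    have := Nat.eq_zero_of_dvd_of_lt h0 (by omega)
    subst this
    exact absurd rfl ht.1
  rcases Nat.eq_zero_or_pos y with rfl | hy0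
  · rw [Multiset.replicate_zero, add_zero, Multiset.sum_replicate,
      ← addOrderOf_dvd_iff_nsmul_eq_zero] at h0
    have := Nat.eq_zero_of_dvd_of_lt h0 (by omega)
    omega
  exact ht.eq_pair_neg (pair_le_replicate_add_replicate hx0 hy0)

/-- A minimal zero-sum sequence through `a • g` in `(a • g) gⁿ (-g)ᵃ` avoids `g` or `-g`. -/
theorem IsMinZeroSum.eq_or_eq_of_nsmul_cons_le {g : G} {a : ℕ} (ha : 0 < a)
    (han : a < addOrderOf g) {t : Multiset G} (ht : IsMinZeroSum (a • g ::ₘ t))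
    (h : t ≤ Multiset.replicate (addOrderOf g) g + Multiset.replicate a (-g)) :
    t = Multiset.replicate a (-g) ∨ t = Multiset.replicate (addOrderOf g - a) g := by
  obtain ⟨x, hx, y, hy, rfl⟩ := Multiset.exists_of_le_replicate_add_replicate h
  have h0 := ht.2.1
  rw [Multiset.sum_cons, Multiset.sum_add, Multiset.sum_replicate, Multiset.sum_replicate] at h0
  rcases Nat.eq_zero_or_pos x with rfl | hx0
  · left
    rw [zero_nsmul, zero_add, neg_nsmul, ← sub_nsmul _ hy,
      ← addOrderOf_dvd_iff_nsmul_eq_zero] at h0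
    have := Nat.eq_zero_of_dvd_of_lt h0 (by omega)
    rw [Multiset.replicate_zero, zero_add, show y = a by omega]
  rcases Nat.eq_zero_or_pos y with rfl | hy0
  · right
    rw [zero_nsmul, add_zero, ← add_nsmul, ← addOrderOf_dvd_iff_nsmul_eq_zero] at h0
    obtain ⟨k, hk⟩ := h0
    have : k = 1 := by
      rcases k with _ | _ | k
      · omega
      · rfl
      · have : addOrderOf g * 2 ≤ addOrderOf g * (k + 1 + 1) := Nat.mul_le_mul_left _ (by omega)
        omega
    subst this
    rw [Multiset.replicate_zero, add_zero, show x = addOrderOf g - a by omega]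
  have := congrArg Multiset.card
    (ht.eq_pair_neg ((pair_le_replicate_add_replicate hx0 hy0).trans (Multiset.le_cons_self _ _)))
  simp [Multiset.insert_eq_cons] at this
  omega

theorem bCatDeg_nsmul_cons {N : ℕ} (hN : ∀ s : Multiset G, IsMinZeroSum s → s.card ≤ N)
    {g : G} {a : ℕ} (ha : 2 ≤ a) (han : a < addOrderOf g) (hg : 4 ≤ addOrderOf g) :
    bCatDeg (a • g ::ₘ (Multiset.replicate (addOrderOf g) g + Multiset.replicate a (-g))) =
      a + 1 := by
  have hsplit : Multiset.replicate (addOrderOf g) g =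
      Multiset.replicate (addOrderOf g - a) g + Multiset.replicate a g := by
    rw [← Multiset.replicate_add, Nat.sub_add_cancel han.le]
  have hF1 : {Multiset.replicate (addOrderOf g) g, a • g ::ₘ Multiset.replicate a (-g)} ∈
      BFact (a • g ::ₘ (Multiset.replicate (addOrderOf g) g + Multiset.replicate a (-g))) := by
    refine ⟨?_, by simp [Multiset.insert_eq_cons]⟩
    simp only [Multiset.insert_eq_cons, Multiset.mem_cons, Multiset.mem_singleton]
    rintro s (rfl | rfl)
    · exact isMinZeroSum_replicate_addOrderOf (by omega)
    · exact isMinZeroSum_nsmul_cons_replicate_neg han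
  have hF2 : (a • g ::ₘ Multiset.replicate (addOrderOf g - a) g) ::ₘ
      Multiset.replicate a {g, -g} ∈
      BFact (a • g ::ₘ (Multiset.replicate (addOrderOf g) g + Multiset.replicate a (-g))) := by
    refine ⟨fun s hs => ?_, ?_⟩
    · rcases Multiset.mem_cons.1 hs with rfl | hs
      · exact isMinZeroSum_nsmul_cons_replicate (by omega) han.le
      · rw [Multiset.eq_of_mem_replicate hs]
        exact isMinZeroSum_pair_neg (by omega)
    · rw [Multiset.sum_cons, Multiset.sum_replicate, Multiset.insert_eq_cons,
        ← Multiset.singleton_add g, nsmul_add, Multiset.nsmul_singleton, Multiset.nsmul_singleton,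
        hsplit, Multiset.cons_add, add_assoc]
  rw [bCatDeg_eq_bdist hN hF1 hF2, bdist_eq_of_disjoint]
  · simp
    omega
  · simp only [Multiset.insert_eq_cons, Multiset.mem_cons, Multiset.mem_singleton,
      Multiset.mem_replicate]
    rintro s (rfl | rfl) (h | ⟨-, h⟩)
    · have := congrArg Multiset.card h
      simp at this
      omega
    · have := congrArg Multiset.card h
      simp at this
      omega
    · have hmem : -g ∈ Multiset.replicate (addOrderOf g - a) g := by
        rw [← (Multiset.cons_inj_right _).1 h]
        exact Multiset.mem_replicate.2 ⟨by omega, rfl⟩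
      have h2 : 2 • g = 0 := by
        rw [two_nsmul, ← neg_eq_iff_add_eq_zero]
        exact Multiset.eq_of_mem_replicate hmem
      have := Nat.le_of_dvd two_pos (addOrderOf_dvd_iff_nsmul_eq_zero.2 h2)
      omega
    · have := congrArg Multiset.card h
      simp at this
      omega
  · intro K hK
    obtain ⟨s, hs, has⟩ := Multiset.mem_join.1
      (show a • g ∈ K.sum by rw [hK.2]; exact Multiset.mem_cons_self _ _)
    obtain ⟨t, rfl⟩ := Multiset.exists_cons_of_mem has
    obtain ⟨K, rfl⟩ := Multiset.exists_cons_of_mem hs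
    have hsum := hK.2
    rw [Multiset.sum_cons, Multiset.cons_add] at hsum
    replace hsum := (Multiset.cons_inj_right _).1 hsum
    have hKm : K ∈ BFact K.sum := ⟨fun s hs => hK.1 s (Multiset.mem_cons_of_mem hs), rfl⟩
    rcases (hK.1 _ hs).eq_or_eq_of_nsmul_cons_le (by omega) han
      (hsum ▸ Multiset.le_add_right _ _) with rfl | rfl
    · left
      rw [add_comm] at hsum
      rw [add_right_cancel hsum] at hKm
      rw [eq_replicate_of_mem_BFact (k := 1) (by rw [Multiset.card_replicate]; omega) (by simp)
        (fun t h ht => ht.eq_of_le_replicate h) hKm, Multiset.replicate_one,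
        Multiset.insert_eq_cons, ← Multiset.singleton_add, add_comm, Multiset.singleton_add]
    · right
      rw [hsplit, add_assoc] at hsum
      rw [add_left_cancel hsum] at hKm
      rw [eq_replicate_of_mem_BFact (k := a) (by simp [Multiset.insert_eq_cons])
        (by simp [Multiset.insert_eq_cons, mul_two]) (fun t h ht => ht.eq_pair_of_le han h) hKm]

/-- The minimal zero-sum sequences dividing `(2g)² g²ⁿ⁻⁴`. -/
theorem IsMinZeroSum.eq_of_le_replicate_two_nsmul {g : G} (hg : 4 ≤ addOrderOf g)
    {t : Multiset G} (ht : IsMinZeroSum t)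
    (h : t ≤ Multiset.replicate 2 (2 • g) + Multiset.replicate (2 * addOrderOf g - 4) g) :
    ∃ x ≤ 2, t = Multiset.replicate x (2 • g) + Multiset.replicate (addOrderOf g - 2 * x) g := by
  obtain ⟨x, hx, y, hy, rfl⟩ := Multiset.exists_of_le_replicate_add_replicate h
  have hpos : 0 < x + y := by simpa using Multiset.card_pos.2 ht.1
  have h0 := ht.2.1
  rw [Multiset.sum_add, Multiset.sum_replicate, Multiset.sum_replicate, smul_smul, ← add_nsmul,
    ← addOrderOf_dvd_iff_nsmul_eq_zero] at h0
  obtain ⟨k, hk⟩ := h0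
  have hk2 : k ≤ 2 := by
    by_contra! hk3
    have : addOrderOf g * 3 ≤ addOrderOf g * k := Nat.mul_le_mul_left _ hk3
    omega
  refine ⟨x, hx, ?_⟩
  interval_cases k
  · omega
  · rw [show y = addOrderOf g - 2 * x by omega]
  · have hle : Multiset.replicate (addOrderOf g) g ≤
        Multiset.replicate x (2 • g) + Multiset.replicate y g :=
      (Multiset.replicate_mono g (by omega)).trans (Multiset.le_add_left _ _)
    have := congrArg Multiset.card ((ht.2.2 _ hle (by simp)).resolve_left
      (isMinZeroSum_replicate_addOrderOf (by omega)).1)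
    simp at this
    omega

theorem bCatDeg_replicate_two_nsmul {N : ℕ}
    (hN : ∀ s : Multiset G, IsMinZeroSum s → s.card ≤ N) {g : G} (hg : 4 ≤ addOrderOf g) :
    bCatDeg (Multiset.replicate 2 (2 • g) + Multiset.replicate (2 * addOrderOf g - 4) g) = 2 := by
  have hne : 2 • g ≠ g := by
    rw [two_nsmul]
    intro h
    rw [add_eq_left.1 h, addOrderOf_zero] at hg
    omega
  let V (x : ℕ) : Multiset G :=
    Multiset.replicate x (2 • g) + Multiset.replicate (addOrderOf g - 2 * x) g
  have hV (x : ℕ) (hx : x ≤ 2) : IsMinZeroSum (V x) := by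
    have := isMinZeroSum_map_nsmul g
      (M := Multiset.replicate x 2 + Multiset.replicate (addOrderOf g - 2 * x) 1)
      (fun i hi => by
        rcases Multiset.mem_add.1 hi with hi | hi <;> simp [Multiset.eq_of_mem_replicate hi])
      (by rw [← Multiset.card_pos]; simp; omega) (by simp; omega)
    simpa [V] using this
  have hcount (x : ℕ) : (V x).count (2 • g) = x := by
    simp [V, Multiset.count_replicate, hne.symm]
  have hcard (x : ℕ) (hx : x ≤ 2) : (V x).card = addOrderOf g - x := by
    simp [V]
    omega
  have hadd {x y : ℕ} (hxy : x + y = 2) : V x + V y =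
      Multiset.replicate 2 (2 • g) + Multiset.replicate (2 * addOrderOf g - 4) g := by
    have h2 : Multiset.replicate 2 (2 • g) =
        Multiset.replicate x (2 • g) + Multiset.replicate y (2 • g) := by
      rw [← Multiset.replicate_add, hxy]
    rw [h2, show 2 * addOrderOf g - 4 = (addOrderOf g - 2 * x) + (addOrderOf g - 2 * y) by omega,
      Multiset.replicate_add]
    exact add_add_add_comm _ _ _ _
  have hmem {x y : ℕ} (hxy : x + y = 2) : {V x, V y} ∈
      BFact (Multiset.replicate 2 (2 • g) + Multiset.replicate (2 * addOrderOf g - 4) g) := by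
    refine ⟨?_, by rw [← hadd hxy]; simp [Multiset.insert_eq_cons]⟩
    simp only [Multiset.insert_eq_cons, Multiset.mem_cons, Multiset.mem_singleton]
    rintro s (rfl | rfl) <;> exact hV _ (by omega)
  rw [bCatDeg_eq_bdist hN (hmem (x := 0) (y := 2) rfl) (hmem (x := 1) (y := 1) rfl),
    bdist_eq_of_disjoint]
  · simp
  · simp only [Multiset.insert_eq_cons, Multiset.mem_cons, Multiset.mem_singleton, or_self]
    rintro s (rfl | rfl) h <;>
    · have := congrArg (Multiset.count (2 • g)) h
      rw [hcount, hcount] at this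
      omega
  · intro K hK
    have hK' : ∀ t ∈ K, ∃ x ≤ 2, t = V x := fun t ht =>
      (hK.1 t ht).eq_of_le_replicate_two_nsmul hg (le_of_mem_BFact hK ht)
    have hweight : ∀ L : Multiset (Multiset G), (∀ t ∈ L, ∃ x ≤ 2, t = V x) →
        L.sum.card + L.sum.count (2 • g) = L.card * addOrderOf g := by
      intro L hL
      induction L using Multiset.induction_on with
      | empty => simp
      | cons t L ih =>
        obtain ⟨x, hx, rfl⟩ := hL t (Multiset.mem_cons_self _ _)
        have := ih fun s hs => hL s (Multiset.mem_cons_of_mem hs)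
        rw [Multiset.sum_cons, Multiset.card_add, Multiset.count_add, Multiset.card_cons, hcount,
          hcard x hx, add_mul]
        omega
    have hw := hweight K hK'
    rw [hK.2, ← hadd (x := 1) (y := 1) rfl, Multiset.card_add, Multiset.count_add, hcount,
      hcard 1 (by omega)] at hw
    have hc : K.card = 2 := by
      refine Nat.eq_of_mul_eq_mul_right (show 0 < addOrderOf g by omega) ?_
      rw [← hw]
      omega
    obtain ⟨s, t, rfl⟩ := Multiset.card_eq_two.1 hc
    obtain ⟨x, hx, rfl⟩ := hK' s (by simp)
    obtain ⟨y, hy, rfl⟩ := hK' t (by simp)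
    have hs := congrArg (Multiset.count (2 • g)) (hK.2.trans (hadd (x := 1) (y := 1) rfl).symm)
    simp only [Multiset.insert_eq_cons, Multiset.sum_cons, Multiset.sum_singleton,
      Multiset.count_add, hcount] at hs
    obtain ⟨rfl, rfl⟩ | ⟨rfl, rfl⟩ | ⟨rfl, rfl⟩ :
      (x = 0 ∧ y = 2) ∨ (x = 1 ∧ y = 1) ∨ (x = 2 ∧ y = 0) := by omega
    · exact .inl rfl
    · exact .inr rfl
    · exact .inl (Multiset.pair_comm _ _)

end BlockMonoid

/-- For G cyclic of order n ≥ 4, the set of catenary degrees of the block monoid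
B(G) is {0, 2, 3, ..., n}. -/
theorem catSet_block_monoid {G : Type*} [AddCommGroup G] [Fintype G]
    [IsAddCyclic G] (n : ℕ) (hn : 4 ≤ n) (hcard : Fintype.card G = n) :
    {c | ∃ A : Multiset G, A.sum = 0 ∧ bCatDeg A = c} = {0} ∪ Set.Icc 2 n := by
  have hN (s : Multiset G) (hs : IsMinZeroSum s) : s.card ≤ n := hcard ▸ hs.card_le
  obtain ⟨g, hg⟩ := IsAddCyclic.exists_ofOrder_eq_natCard (α := G)
  rw [Nat.card_eq_fintype_card, hcard] at hg
  ext c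
  simp only [Set.mem_ofPred_eq, Set.mem_union, Set.mem_singleton_iff, Set.mem_Icc]
  constructor
  · rintro ⟨A, -, rfl⟩
    have h1 := bCatDeg_ne_one hN A
    have h2 : bCatDeg A ≤ n := Nat.sInf_le (isNChain_of_card_le hN A)
    omega
  · rintro (rfl | ⟨h2, hcn⟩)
    · refine ⟨0, by simp, bCatDeg_eq_zero_of_subsingleton fun F hF F' hF' => ?_⟩
      rw [eq_zero_of_sum_eq_zero hF.1 hF.2, eq_zero_of_sum_eq_zero hF'.1 hF'.2]
    · rcases h2.eq_or_lt with rfl | h3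
      · refine ⟨_, ?_, bCatDeg_replicate_two_nsmul hN (g := g) (by omega)⟩
        rw [Multiset.sum_add, Multiset.sum_replicate, Multiset.sum_replicate, smul_smul,
          ← add_nsmul, ← addOrderOf_dvd_iff_nsmul_eq_zero]
        exact ⟨2, by omega⟩
      · obtain ⟨a, rfl⟩ : ∃ a, c = a + 1 := ⟨c - 1, by omega⟩
        refine ⟨_, ?_, bCatDeg_nsmul_cons hN (g := g) (a := a) (by omega) (by omega) (by omega)⟩
        simp
end
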